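/- arXiv:1305.4840 — 2 statements merged into one kernel-verified Lean document; each statement's English description precedes it below -/
import Mathlib

section
/- Let C_1, C_2 be linear codes in F_q^n, both with full support (equivalently, both dual codes have minimum distance at least 2). Then dim(C_1 * C_2) ≥ min(n, dim(C_1) + dmin(C_2^⊥) - 2), where C_2^⊥ is the dual code of C_2 and dmin denotes minimum distance. -/
noncomputable section

/-- The componentwise product code of two linear codes. -/
def prodCode (F : Type*) [Field F] {n : ℕ}
    (C C' : Submodule F (Fin n → F)) : Submodule F (Fin n → F) :=
  Submodule.span F {z | ∃ c ∈ C, ∃ c' ∈ C', z = c * c'}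

/-- The t-fold componentwise power of a code (convention: 0th power is ⊤). -/
def powCode (F : Type*) [Field F] {n : ℕ} (C : Submodule F (Fin n → F)) :
    ℕ → Submodule F (Fin n → F)
  | 0 => ⊤
  | 1 => C
  | (t+2) => prodCode F (powCode F C (t+1)) C

/-- Minimum distance: minimum Hamming weight of a nonzero codeword. -/
def dmin {F : Type*} [Field F] [DecidableEq F] {n : ℕ}
    (C : Submodule F (Fin n → F)) : ℕ :=
  sInf {w | ∃ c ∈ C, c ≠ 0 ∧ hammingNorm c = w}

/-- The dual code with respect to the standard bilinear form. -/
def dualCode (F : Type*) [Field F] {n : ℕ}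
    (C : Submodule F (Fin n → F)) : Submodule F (Fin n → F) where
  carrier := {x | ∀ c ∈ C, ∑ i, x i * c i = 0}
  zero_mem' := by intro c hc; simp
  add_mem' := by
    intro a b ha hb c hc
    have h : ∑ i, (a + b) i * c i = (∑ i, a i * c i) + ∑ i, b i * c i := by
      simp [add_mul, Finset.sum_add_distrib]
    simp only [Set.mem_setOf_eq] at *
    rw [h, ha c hc, hb c hc, add_zero]
  smul_mem' := by
    intro r a ha c hc
    simp only [Pi.smul_apply, smul_eq_mul, mul_assoc, ← Finset.mul_sum, Set.mem_setOf_eq] at *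
    rw [ha c hc, mul_zero]

/-- A code has full support if every coordinate carries a nonzero codeword value. -/
def fullSupport (F : Type*) [Field F] {n : ℕ} (C : Submodule F (Fin n → F)) : Prop :=
  ∀ j, ∃ c ∈ C, c j ≠ 0

/-- Product code of a family of codes. -/
def prodFamily (F : Type*) [Field F] {n t : ℕ}
    (C : Fin t → Submodule F (Fin n → F)) : Submodule F (Fin n → F) :=
  Submodule.span F {z | ∃ c : Fin t → (Fin n → F), (∀ i, c i ∈ C i) ∧ z = ∏ i, c i}

/-!
Regard the coordinates `C → F` of a code `C` as vectors of the dual space of `C`; a linear relation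
among them is precisely a word of the dual code. Hence any `dmin C₂^⊥ - 1` coordinates of `C₂` are
linearly independent, while some `dim C₁` coordinates of `C₁`, indexed by `I` say, are independent.
Let `J` be disjoint from `I` with at most `dmin C₂^⊥ - 2` elements. The coordinates of `C₁ * C₂`
indexed by `I ∪ J` are independent: let `x` be a relation among them, so that `x * c` is a relation
for `C₁` whenever `c ∈ C₂`, and vice versa. For `i ∈ I` pick `c ∈ C₂` vanishing on `J` but not at
`i`; then `x * c` is supported on `I`, hence zero, and `x i = 0`. So `x` is supported on `J`, and
for `j ∈ J` any `c ∈ C₁` with `c j ≠ 0` gives a relation `x * c` for `C₂` supported on `J`, whence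
`x j = 0`.
-/

section Coordinates

variable {K ι : Type*} [Field K] (C : Submodule K (ι → K))

/-- The `i`-th coordinate of a code, as a linear functional on the code. Linear independence of
coordinates is independence in the matroid of the code, whose bases are its information sets. -/
def codeCoord (i : ι) : Module.Dual K C :=
  (LinearMap.proj i).domRestrict C

@[simp]
theorem codeCoord_apply (i : ι) (c : C) : codeCoord C i c = c.1 i :=
  rfl

variable [Finite ι]

theorem span_range_codeCoord : Submodule.span K (Set.range (codeCoord C)) = ⊤ := by
  refine eq_top_iff.2 fun f _ => FiniteDimensional.mem_span_of_iInf_ker_le_ker fun c hc => ?_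
  have hc0 : c = 0 := Subtype.ext (funext fun i => (Submodule.mem_iInf _).1 hc i)
  rw [hc0]
  exact zero_mem _

theorem exists_linearIndepOn_codeCoord_card_eq_finrank :
    ∃ I : Finset ι, LinearIndepOn K (codeCoord C) I ∧ I.card = Module.finrank K C := by
  obtain ⟨I, -, -, hspan, hI⟩ :=
    exists_linearIndepOn_extension (linearIndepOn_empty K (codeCoord C)) (Set.empty_subset .univ)
  rw [Set.image_univ, ← Submodule.span_le, span_range_codeCoord, Set.image_eq_range] at hspan
  lift I to Finset ι using I.toFinite
  refine ⟨I, hI, ?_⟩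
  rw [← Subspace.dual_finrank_eq, Module.finrank_eq_card_basis (Module.Basis.mk hI hspan)]
  simp

variable {C}

theorem card_le_finrank_of_linearIndepOn_codeCoord {S : Finset ι}
    (hS : LinearIndepOn K (codeCoord C) S) : S.card ≤ Module.finrank K C := by
  rw [← Subspace.dual_finrank_eq]
  simpa using LinearIndependent.fintype_card_le_finrank hS

theorem exists_mem_ne_zero_of_linearIndepOn_codeCoord_insert {S : Set ι} {i : ι} (hi : i ∉ S)
    (hS : LinearIndepOn K (codeCoord C) (insert i S)) :
    ∃ c ∈ C, c i ≠ 0 ∧ ∀ s ∈ S, c s = 0 := by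
  by_contra! h
  apply hS.notMem_span_of_insert hi
  rw [Set.image_eq_range]
  refine FiniteDimensional.mem_span_of_iInf_ker_le_ker fun c hc => ?_
  by_contra hci
  obtain ⟨s, hs, hcs⟩ := h c c.2 hci
  exact hcs ((Submodule.mem_iInf _).1 hc ⟨s, hs⟩)

end Coordinates

section Dual

variable {F : Type*} [Field F] {n : ℕ} {C C₁ C₂ : Submodule F (Fin n → F)} {x c : Fin n → F}

theorem mem_dualCode_iff_sum_smul_codeCoord_eq_zero :
    x ∈ dualCode F C ↔ ∑ i, x i • codeCoord C i = 0 := by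
  rw [LinearMap.ext_iff, Subtype.forall]
  simp [dualCode]

theorem linearIndepOn_codeCoord_iff {S : Finset (Fin n)} :
    LinearIndepOn F (codeCoord C) S ↔ ∀ x ∈ dualCode F C, (∀ i ∉ S, x i = 0) → x = 0 := by
  classical
  rw [linearIndepOn_finset_iff]
  constructor
  · intro h x hx hxS
    rw [mem_dualCode_iff_sum_smul_codeCoord_eq_zero, ← Finset.sum_subset S.subset_univ] at hx
    · funext i
      by_cases hi : i ∈ S
      exacts [h x hx i hi, hxS i hi]
    · intro i _ hi
      rw [hxS i hi, zero_smul]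
  · intro h y hy i hi
    have hz : (fun j => if j ∈ S then y j else 0) = 0 := by
      refine h _ ?_ fun j hj => if_neg hj
      simpa [mem_dualCode_iff_sum_smul_codeCoord_eq_zero, ite_smul] using hy
    simpa [hi] using congrFun hz i

theorem linearIndepOn_codeCoord_of_card_lt_dmin [DecidableEq F] {S : Finset (Fin n)}
    (hS : S.card < dmin (dualCode F C)) : LinearIndepOn F (codeCoord C) S := by
  refine linearIndepOn_codeCoord_iff.2 fun x hx hxS => ?_
  by_contra hx0
  have hdmin : dmin (dualCode F C) ≤ hammingNorm x := Nat.sInf_le ⟨x, hx, hx0, rfl⟩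
  have hnorm : hammingNorm x ≤ S.card := Finset.card_le_card fun i hi => by
    by_contra hiS
    exact (Finset.mem_filter.1 hi).2 (hxS i hiS)
  omega

theorem linearIndepOn_codeCoord_of_card_le_one (hC : fullSupport F C) {S : Finset (Fin n)}
    (hS : S.card ≤ 1) : LinearIndepOn F (codeCoord C) S := by
  rcases Nat.le_one_iff_eq_zero_or_eq_one.1 hS with h0 | h1
  · rw [Finset.card_eq_zero.1 h0, Finset.coe_empty]
    exact linearIndepOn_empty F _
  · obtain ⟨i, rfl⟩ := Finset.card_eq_one.1 h1
    obtain ⟨c, hc, hci⟩ := hC i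
    rw [Finset.coe_singleton]
    exact .singleton fun hi => hci (LinearMap.congr_fun hi ⟨c, hc⟩)

theorem prodCode_comm : prodCode F C₁ C₂ = prodCode F C₂ C₁ := by
  refine congrArg (Submodule.span F) (Set.ext fun z => ?_)
  constructor <;> rintro ⟨c, hc, c', hc', rfl⟩ <;> exact ⟨c', hc', c, hc, mul_comm c c'⟩

theorem mul_mem_dualCode_of_mem_left (hx : x ∈ dualCode F (prodCode F C₁ C₂)) (hc : c ∈ C₁) :
    x * c ∈ dualCode F C₂ := by
  intro c' hc'
  simpa [mul_assoc] using hx (c * c') (Submodule.subset_span ⟨c, hc, c', hc', rfl⟩)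

theorem mul_mem_dualCode_of_mem_right (hx : x ∈ dualCode F (prodCode F C₁ C₂)) (hc : c ∈ C₂) :
    x * c ∈ dualCode F C₁ :=
  mul_mem_dualCode_of_mem_left (prodCode_comm (C₁ := C₁) ▸ hx) hc

end Dual

section Product

variable {F : Type*} [Field F] {n : ℕ} {C₁ C₂ : Submodule F (Fin n → F)}

theorem linearIndepOn_codeCoord_prodCode_union (h₁ : fullSupport F C₁) {I J : Finset (Fin n)}
    (hIJ : Disjoint I J) (hI : LinearIndepOn F (codeCoord C₁) I)
    (hJ : LinearIndepOn F (codeCoord C₂) J)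
    (hinsert : ∀ i ∈ I, LinearIndepOn F (codeCoord C₂) (insert i (J : Set (Fin n)))) :
    LinearIndepOn F (codeCoord (prodCode F C₁ C₂)) (I ∪ J : Finset (Fin n)) := by
  rw [linearIndepOn_codeCoord_iff] at hI hJ ⊢
  intro x hx hxIJ
  have hxI : ∀ i ∈ I, x i = 0 := by
    intro i hi
    obtain ⟨c, hc, hci, hcJ⟩ := exists_mem_ne_zero_of_linearIndepOn_codeCoord_insert
      (Finset.disjoint_left.1 hIJ hi) (hinsert i hi)
    have hxc : x * c = 0 := hI _ (mul_mem_dualCode_of_mem_right hx hc) fun k hk => by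
      by_cases hkJ : k ∈ J
      · simp [hcJ k hkJ]
      · simp [hxIJ k (by simp [hk, hkJ])]
    exact (mul_eq_zero.1 (congrFun hxc i)).resolve_right hci
  have hxJ : ∀ k ∉ J, x k = 0 := fun k hk => by
    by_cases hkI : k ∈ I
    exacts [hxI k hkI, hxIJ k (by simp [hk, hkI])]
  funext j
  obtain ⟨c, hc, hcj⟩ := h₁ j
  have hxc : x * c = 0 := hJ _ (mul_mem_dualCode_of_mem_left hx hc) fun k hk => by
    rw [Pi.mul_apply, hxJ k hk, zero_mul]
  exact (mul_eq_zero.1 (congrFun hxc j)).resolve_right hcj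

theorem min_finrank_add_le_finrank_prodCode (h₁ : fullSupport F C₁) {t : ℕ}
    (h₂ : ∀ S : Finset (Fin n), S.card ≤ t + 1 → LinearIndepOn F (codeCoord C₂) S) :
    min n (Module.finrank F C₁ + t) ≤ Module.finrank F (prodCode F C₁ C₂) := by
  obtain ⟨I, hI, hcardI⟩ := exists_linearIndepOn_codeCoord_card_eq_finrank C₁
  obtain ⟨J, hJI, hcardJ⟩ := Finset.exists_subset_card_eq (min_le_right t Iᶜ.card)
  have hIJ : Disjoint I J := Finset.disjoint_right.2 fun j hj => Finset.mem_compl.1 (hJI hj)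
  have hcardJt : J.card ≤ t := hcardJ.trans_le (min_le_left _ _)
  have hunion := card_le_finrank_of_linearIndepOn_codeCoord <|
    linearIndepOn_codeCoord_prodCode_union h₁ hIJ hI (h₂ J (by omega)) fun i _ => by
      rw [← Finset.coe_insert]
      exact h₂ _ ((J.card_insert_le i).trans (by omega))
  rw [Finset.card_union_of_disjoint hIJ, hcardJ, Finset.card_compl, Fintype.card_fin] at hunion
  omega

end Product

theorem stmt1_general {F : Type*} [Field F] [DecidableEq F] {n : ℕ}
    (C₁ C₂ : Submodule F (Fin n → F))
    (h1 : fullSupport F C₁) (h2 : fullSupport F C₂) :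
    min (n : ℤ) ((Module.finrank F C₁ : ℤ) + (dmin (dualCode F C₂) : ℤ) - 2)
      ≤ (Module.finrank F (prodCode F C₁ C₂) : ℤ) := by
  -- If `C₂ = ⊤`, then `dmin` of the zero dual code is the junk value `sInf ∅ = 0`, so sets of at
  -- most one coordinate are handled through the support instead.
  have hindep : ∀ S : Finset (Fin n), S.card ≤ dmin (dualCode F C₂) - 2 + 1 →
      LinearIndepOn F (codeCoord C₂) S := fun S hS => by
    by_cases hS1 : S.card ≤ 1
    · exact linearIndepOn_codeCoord_of_card_le_one h2 hS1
    · exact linearIndepOn_codeCoord_of_card_lt_dmin (by omega)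
  have hmin := min_finrank_add_le_finrank_prodCode h1 hindep
  omega

theorem stmt1 {F : Type*} [Field F] [Fintype F] [DecidableEq F] {n : ℕ}
    (C₁ C₂ : Submodule F (Fin n → F))
    (h1 : fullSupport F C₁) (h2 : fullSupport F C₂) :
    min (n : ℤ) ((Module.finrank F C₁ : ℤ) + (dmin (dualCode F C₂) : ℤ) - 2)
      ≤ (Module.finrank F (prodCode F C₁ C₂) : ℤ) :=
  stmt1_general C₁ C₂ h1 h2

end
end

section
/- Let t ≥ 2 and let C ⊆ F_q^n be a linear code of dimension k such that the t-th power code C^(t) is nonzero. Then dmin(C^(t)) ≤ max(t - 1, n + t - t·k). -/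
noncomputable section

/-!
If the `i`-th of `t` codewords of `C` vanishes on `B i`, their product vanishes on `⋃ i, B i`, and
it can be kept nonzero at a coordinate `j` as long as no `B i` spans `j` in the matroid of `C`. So
it suffices to find such sets covering all but `t - 1` points of a set `E` of coordinates; this is
possible when `#E < t * rank E`, and `E` can be chosen with `min n (t * k - 1)` points. The covering
statement is a strict form of the Edmonds–Rado theorem that `E` is covered by `t` independent sets
as soon as `#S ≤ t * rank S` for all `S ⊆ E`. That theorem is applied to a contraction of the
matroid, with one extra uniform matroid absorbing the exceptional points.
-/

section Submodular

open Finset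

variable {α : Type*} [DecidableEq α]

/-- A monotone submodular integer-valued set function, that is, the rank function of an integral
polymatroid up to an additive constant: the value at `∅` is left free, so that subtracting a
constant stays inside the class. -/
structure MonotoneSubmodular (r : Finset α → ℤ) : Prop where
  monotone : Monotone r
  union_add_inter_le (S T : Finset α) : r (S ∪ T) + r (S ∩ T) ≤ r S + r T

namespace MonotoneSubmodular

variable {r : Finset α → ℤ}

lemma insert_add_le_insert_add (hr : MonotoneSubmodular r) {S T : Finset α} (hST : S ⊆ T)
    (e : α) : r (insert e T) + r S ≤ r (insert e S) + r T := by
  have hunion : insert e S ∪ T = insert e T := by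
    rw [insert_union, union_eq_right.2 hST]
  have hinter : r S ≤ r (insert e S ∩ T) :=
    hr.monotone (subset_inter (subset_insert e S) hST)
  have hsub := hr.union_add_inter_le (insert e S) T
  rw [hunion] at hsub
  linarith

lemma union_sub_const (hr : MonotoneSubmodular r) (A : Finset α) (c : ℤ) :
    MonotoneSubmodular fun S ↦ r (S ∪ A) - c where
  monotone S T hST := sub_le_sub_right (hr.monotone (union_subset_union_left hST)) c
  union_add_inter_le S T := by
    have := hr.union_add_inter_le (S ∪ A) (T ∪ A)
    rw [← union_union_distrib_right, ← inter_union_distrib_right] at this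
    linarith

lemma min_const (hr : MonotoneSubmodular r) (c : ℤ) :
    MonotoneSubmodular fun S ↦ min (r S) c where
  monotone S T hST := min_le_min_right c (hr.monotone hST)
  union_add_inter_le S T := by
    have := hr.union_add_inter_le S T
    have := hr.monotone (inter_subset_left : S ∩ T ⊆ S)
    have := hr.monotone (inter_subset_right : S ∩ T ⊆ T)
    lia

end MonotoneSubmodular

lemma monotoneSubmodular_card : MonotoneSubmodular fun S : Finset α ↦ (#S : ℤ) where
  monotone _ _ hST := Int.ofNat_le.2 (card_le_card hST)
  union_add_inter_le S T := mod_cast (card_union_add_card_inter S T).le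

section Cover

variable {ι : Type*} [Fintype ι] {r : ι → Finset α → ℤ}

lemma supClosed_setOf_sum_le_card (hr : ∀ i, MonotoneSubmodular (r i)) {R : Finset α}
    (hR : ∀ S ⊆ R, (#S : ℤ) ≤ ∑ i, r i S) :
    SupClosed {S : Finset α | S ⊆ R ∧ ∑ i, r i S ≤ #S} := by
  rintro S ⟨hSR, hS⟩ T ⟨hTR, hT⟩
  refine ⟨union_subset hSR hTR, ?_⟩
  have hsub : ∑ i, r i (S ∪ T) + ∑ i, r i (S ∩ T) ≤ ∑ i, r i S + ∑ i, r i T := by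
    simp only [← sum_add_distrib]
    exact sum_le_sum fun i _ ↦ (hr i).union_add_inter_le S T
  have hcard : (#(S ∪ T) : ℤ) + #(S ∩ T) = #S + #T := mod_cast card_union_add_card_inter S T
  have hinter := hR (S ∩ T) (inter_subset_left.trans hSR)
  change ∑ i, r i (S ∪ T) ≤ #(S ∪ T)
  linarith

variable [Nonempty ι]

lemma exists_forall_card_lt_sum_union_ite [DecidableEq ι] (hr : ∀ i, MonotoneSubmodular (r i))
    {R : Finset α} {e : α} (he : e ∉ R) (hR : ∀ S ⊆ insert e R, (#S : ℤ) ≤ ∑ i, r i S) :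
    ∃ i, ∀ S ⊆ R, (#S : ℤ) < ∑ l, r l (S ∪ if l = i then {e} else ∅) := by
  by_contra! hcon
  have hR' : ∀ S ⊆ R, (#S : ℤ) ≤ ∑ i, r i S := fun S hS ↦ hR S (hS.trans (subset_insert e R))
  choose S hSR hS using hcon
  have hle (i l) : r l (S i) ≤ r l (S i ∪ if l = i then {e} else ∅) :=
    (hr l).monotone subset_union_left
  have htight (i) : ∑ l, r l (S i) ≤ #(S i) := (sum_le_sum fun l _ ↦ hle i l).trans (hS i)
  have hmarginal (i) : r i (insert e (S i)) = r i (S i) := by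
    have hsum := ((hS i).trans (hR' _ (hSR i))).antisymm (sum_le_sum fun l _ ↦ hle i l)
    have := (sum_eq_sum_iff_of_le fun l _ ↦ hle i l).1 hsum.symm i (mem_univ i)
    rw [if_pos rfl, union_singleton] at this
    exact this.symm
  -- The union of the tight sets `S i` is tight, and adding `e` to it increases none of the `r i`.
  set T := univ.sup' univ_nonempty S
  obtain ⟨hTR, hT⟩ : T ⊆ R ∧ ∑ i, r i T ≤ #T :=
    (supClosed_setOf_sum_le_card hr hR').finsetSup'_mem univ_nonempty fun i _ ↦ ⟨hSR i, htight i⟩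
  have hinsert : ∑ i, r i (insert e T) ≤ ∑ i, r i T := sum_le_sum fun i _ ↦ by
    have := (hr i).insert_add_le_insert_add (le_sup' S (mem_univ i) : S i ⊆ T) e
    linarith [hmarginal i]
  have hcard := hR (insert e T) (insert_subset_insert e hTR)
  rw [card_insert_of_notMem fun h ↦ he (hTR h)] at hcard
  push_cast at hcard
  linarith

theorem exists_cover_of_card_le_sum (hr : ∀ i, MonotoneSubmodular (r i)) {R : Finset α}
    (hR : ∀ S ⊆ R, (#S : ℤ) ≤ ∑ i, r i S) :
    ∃ B : ι → Finset α, R ⊆ univ.biUnion B ∧ ∑ i, (#(B i) : ℤ) ≤ ∑ i, r i (B i) := by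
  classical
  induction R using Finset.induction_on generalizing r with
  | empty => exact ⟨fun _ ↦ ∅, empty_subset _, by simpa using hR ∅ subset_rfl⟩
  | insert e R he ih =>
    obtain ⟨i, hi⟩ := exists_forall_card_lt_sum_union_ite hr he hR
    let A (l : ι) : Finset α := if l = i then {e} else ∅
    have hA : ∑ l, (#(A l) : ℤ) = 1 := by simp [A, apply_ite]
    obtain ⟨B, hcover, hsum⟩ := ih (fun l ↦ (hr l).union_sub_const (A l) #(A l)) fun S hS ↦ by
      rw [sum_sub_distrib, hA]
      linarith [Int.add_one_le_of_lt (hi S hS)]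
    refine ⟨fun l ↦ B l ∪ A l, insert_subset ?_ (hcover.trans ?_), ?_⟩
    · exact mem_biUnion.2 ⟨i, mem_univ i, mem_union_right _ (by simp [A])⟩
    · exact biUnion_mono fun l _ ↦ subset_union_left
    · calc ∑ l, (#(B l ∪ A l) : ℤ)
          ≤ ∑ l, ((#(B l) : ℤ) + #(A l)) := sum_le_sum fun l _ ↦ mod_cast card_union_le _ _
        _ ≤ ∑ l, r l (B l ∪ A l) := by
          rw [sum_sub_distrib] at hsum
          rw [sum_add_distrib]
          linarith

end Cover

/-- The axioms of the rank function of a matroid on `α`. Ranks are integers rather than natural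
numbers so that subtraction is not truncated. -/
structure IsMatroidRank (r : Finset α → ℤ) : Prop extends MonotoneSubmodular r where
  map_empty : r ∅ = 0
  le_card (S : Finset α) : r S ≤ #S

namespace IsMatroidRank

variable {r : Finset α → ℤ}

lemma nonneg (hr : IsMatroidRank r) (S : Finset α) : 0 ≤ r S :=
  hr.map_empty.symm.trans_le (hr.monotone (empty_subset S))

lemma union_le_add_card (hr : IsMatroidRank r) (S T : Finset α) : r (S ∪ T) ≤ r S + #T := by
  linarith [hr.union_add_inter_le S T, hr.nonneg (S ∩ T), hr.le_card T]

lemma insert_le_add_one (hr : IsMatroidRank r) (e : α) (S : Finset α) :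
    r (insert e S) ≤ r S + 1 := by
  simpa using hr.union_le_add_card S {e}

lemma contract (hr : IsMatroidRank r) (A : Finset α) :
    IsMatroidRank fun S ↦ r (S ∪ A) - r A where
  toMonotoneSubmodular := hr.toMonotoneSubmodular.union_sub_const A (r A)
  map_empty := by simp
  le_card S := by
    have := hr.union_le_add_card A S
    rw [union_comm] at this
    linarith

lemma exists_subset_card_eq (hr : IsMatroidRank r) (S : Finset α) :
    ∃ I ⊆ S, (#I : ℤ) = r I ∧ r I = r S := by
  induction S using Finset.induction_on with
  | empty => exact ⟨∅, subset_rfl, by simp [hr.map_empty], rfl⟩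
  | insert e S he ih =>
    obtain ⟨I, hIS, hI, hIr⟩ := ih
    have hmono := hr.monotone (subset_insert e S)
    rcases hmono.eq_or_lt with heq | hlt
    · exact ⟨I, hIS.trans (subset_insert e S), hI, hIr.trans heq⟩
    · have hsub := insert_subset_insert e hIS
      have hcard : (#(insert e I) : ℤ) = #I + 1 :=
        mod_cast card_insert_of_notMem fun h ↦ he (hIS h)
      have := hr.insert_add_le_insert_add hIS e
      have := hr.monotone hsub
      have := hr.le_card (insert e I)
      exact ⟨insert e I, hsub, by linarith, by linarith⟩

theorem exists_cover_of_card_le_mul_add (hr : IsMatroidRank r) {t d : ℕ} {R : Finset α}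
    (hR : ∀ S ⊆ R, (#S : ℤ) ≤ t * r S + d) :
    ∃ (U : Finset α) (B : Fin t → Finset α),
      #U ≤ d ∧ (∀ i, r (B i) = #(B i)) ∧ R ⊆ U ∪ univ.biUnion B := by
  -- The exceptional set `U` is one more independent set, for the uniform matroid of rank `d`.
  let ρ : Option (Fin t) → Finset α → ℤ := fun o ↦ o.elim (fun S ↦ min #S d) fun _ ↦ r
  have hρ (o) : MonotoneSubmodular (ρ o) := by
    cases o with
    | none => exact monotoneSubmodular_card.min_const d
    | some i => exact hr.toMonotoneSubmodular
  have hρ_le (o S) : ρ o S ≤ #S := by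
    cases o with
    | none => exact min_le_left _ _
    | some i => exact hr.le_card S
  obtain ⟨B, hcover, hsum⟩ := exists_cover_of_card_le_sum hρ (R := R) fun S hS ↦ by
    have : ∑ o, ρ o S = min (#S : ℤ) d + t * r S := by simp [ρ, Fintype.sum_option]
    have := hR S hS
    have : 0 ≤ t * r S := mul_nonneg t.cast_nonneg (hr.nonneg S)
    lia
  have heq (o) : ρ o (B o) = #(B o) :=
    (sum_eq_sum_iff_of_le fun o _ ↦ hρ_le o (B o)).1
      ((sum_le_sum fun o _ ↦ hρ_le o (B o)).antisymm hsum) o (mem_univ o)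
  refine ⟨B none, fun i ↦ B (some i), ?_, fun i ↦ heq (some i), ?_⟩
  · exact_mod_cast min_eq_left_iff.1 (heq none)
  · intro e he
    simpa [Option.exists] using hcover he

lemma exists_maximal_mul_le_card (hr : IsMatroidRank r) (t : ℕ) (E : Finset α) :
    ∃ G ⊆ E, t * r G ≤ #G ∧ ∀ T ⊆ E, G ⊂ T → (#T : ℤ) < t * r T := by
  obtain ⟨G, -, hG⟩ := (E.powerset.filter fun G ↦ t * r G ≤ #G).exists_le_maximal
    (a := ∅) (by simp [hr.map_empty])
  simp only [mem_filter, mem_powerset] at hG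
  refine ⟨G, hG.prop.1, hG.prop.2, fun T hTE hGT ↦ ?_⟩
  by_contra! hT
  exact hG.not_prop_of_gt hGT ⟨hTE, hT⟩

-- Take `G` maximal with `t * r G ≤ #G`: nonempty sets in the contraction by `G` have slack at least
-- one, and contracting one more point `j` turns this slack into a deficiency of at most `t - 2`.
lemma exists_insert_forall_card_add_two_le (hr : IsMatroidRank r) {t : ℕ} {E : Finset α}
    (hE : (#E : ℤ) < t * r E) :
    ∃ (G : Finset α) (j : α), r (insert j G) = r G + 1 ∧
      ∀ S ⊆ E \ insert j G, (#S : ℤ) + 2 ≤ t * (r (S ∪ insert j G) - r (insert j G)) + t := by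
  obtain ⟨G, hGE, hG, hGmax⟩ := hr.exists_maximal_mul_le_card t E
  obtain ⟨j, hjE, hjG⟩ := exists_of_ssubset (hGE.ssubset_of_ne (by grind))
  have hjGE : insert j G ⊆ E := insert_subset hjE hGE
  have hcard : (#(insert j G) : ℤ) = #G + 1 := mod_cast card_insert_of_notMem hjG
  have hrank : r (insert j G) = r G + 1 := by
    refine (hr.insert_le_add_one j G).antisymm (Int.add_one_le_of_lt ?_)
    refine lt_of_mul_lt_mul_left (a := (t : ℤ)) ?_ t.cast_nonneg
    linarith [hGmax _ hjGE (ssubset_insert hjG)]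
  refine ⟨G, j, hrank, fun S hS ↦ ?_⟩
  have hunion : (#(S ∪ insert j G) : ℤ) = #S + #(insert j G) :=
    mod_cast card_union_of_disjoint (disjoint_of_subset_left hS sdiff_disjoint)
  have hlt := hGmax (S ∪ insert j G) (union_subset (hS.trans sdiff_subset) hjGE)
    ((ssubset_insert hjG).trans_subset subset_union_right)
  rw [hrank]
  linarith

theorem exists_cover_of_card_lt_mul (hr : IsMatroidRank r) {t : ℕ} {E : Finset α}
    (hE : (#E : ℤ) < t * r E) :
    ∃ (j : α) (U : Finset α) (B : Fin t → Finset α),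
      #U < t ∧ (∀ i, r (B i) < r (insert j (B i))) ∧ E ⊆ U ∪ univ.biUnion B := by
  obtain ⟨G, j, hrank, hslack⟩ := hr.exists_insert_forall_card_add_two_le hE
  obtain ⟨d, rfl⟩ : ∃ d, t = d + 2 :=
    Nat.exists_eq_add_of_le' (by simpa using hslack ∅ (empty_subset _))
  obtain ⟨U, B, hU, hB, hcover⟩ := (hr.contract (insert j G)).exists_cover_of_card_le_mul_add
    (t := d + 2) (d := d) fun S hS ↦ by
      have := hslack S hS
      push_cast at this ⊢
      linarith
  refine ⟨j, insert j U, fun i ↦ B i ∪ G, ?_, fun i ↦ ?_, fun e he ↦ ?_⟩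
  · linarith [card_insert_le j U]
  · have hBi : r (insert j (B i ∪ G)) - r (insert j G) = #(B i) := by
      rw [← union_insert]
      exact hB i
    have := hr.union_le_add_card G (B i)
    rw [union_comm] at this
    linarith
  · have := @hcover e
    simp only [mem_sdiff, mem_insert, mem_union, mem_biUnion, mem_univ, true_and] at this ⊢
    by_cases heG : e ∈ G
    · exact .inr ⟨0, .inr heG⟩
    · grind

variable [Fintype α]

lemma exists_card_lt_mul (hr : IsMatroidRank r) {t k : ℕ} (ht : 2 ≤ t) (hk : 0 < k)
    (hrk : r univ = k) :
    ∃ E, (#E : ℤ) < t * r E ∧ min (Fintype.card α) (t * k - 1) ≤ #E := by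
  obtain ⟨I, -, hI, hIr⟩ := hr.exists_subset_card_eq univ
  have : #I = k := by exact_mod_cast hI.trans (hIr.trans hrk)
  have htk : 2 * k ≤ t * k := Nat.mul_le_mul_right k ht
  obtain ⟨E, hIE, -, hE⟩ := exists_subsuperset_card_eq (subset_univ I)
    (n := min (Fintype.card α) (t * k - 1)) (le_min (card_le_univ I) (by lia)) (min_le_left _ _)
  refine ⟨E, ?_, hE.ge⟩
  have hrE : r E = k :=
    ((hr.monotone (subset_univ E)).trans_eq hrk).antisymm (by linarith [hr.monotone hIE])
  rw [hrE, hE]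
  zify at htk
  lia

theorem exists_card_compl_biUnion_le_max (hr : IsMatroidRank r) {t k : ℕ} (ht : 2 ≤ t) (hk : 0 < k)
    (hrk : r univ = k) :
    ∃ (j : α) (B : Fin t → Finset α), (∀ i, r (B i) < r (insert j (B i))) ∧
      #(univ.biUnion B)ᶜ ≤ max (t - 1) (Fintype.card α + t - t * k) := by
  obtain ⟨E, hE, hcard⟩ := hr.exists_card_lt_mul ht hk hrk
  obtain ⟨j, U, B, hU, hB, hcover⟩ := hr.exists_cover_of_card_lt_mul hE
  refine ⟨j, B, hB, ?_⟩
  have hsub : (univ.biUnion B)ᶜ ⊆ Eᶜ ∪ U := fun e he ↦ by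
    have := @hcover e
    simp only [mem_compl, mem_union] at this he ⊢
    tauto
  have hle := (card_le_card hsub).trans (card_union_le _ _)
  rw [card_compl E] at hle
  lia

end IsMatroidRank

end Submodular

section Codes

open Finset Module
open LinearMap (ker)

variable {F : Type*} [Field F]

section Restriction

variable {α : Type*}

/-- The restriction of the codewords of `C` to the coordinates in `S`; its range is the punctured
code and its kernel the shortened code. -/
def codeRestrict (C : Submodule F (α → F)) (S : Finset α) : C →ₗ[F] (S → F) :=
  (LinearMap.funLeft F F Subtype.val).domRestrict C

/-- The rank of the coordinate set `S` in the matroid of the code `C`: the dimension of `C`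
punctured down to `S`. -/
def codeRank (C : Submodule F (α → F)) (S : Finset α) : ℕ :=
  finrank F (LinearMap.range (codeRestrict C S))

variable {C : Submodule F (α → F)} {S T : Finset α}

lemma mem_ker_codeRestrict {c : C} : c ∈ ker (codeRestrict C S) ↔ ∀ j ∈ S, (c : α → F) j = 0 := by
  simp [codeRestrict, funext_iff]

lemma ker_codeRestrict_anti (hST : S ⊆ T) : ker (codeRestrict C T) ≤ ker (codeRestrict C S) :=
  fun _ hc ↦ mem_ker_codeRestrict.2 fun j hj ↦ mem_ker_codeRestrict.1 hc j (hST hj)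

lemma ker_codeRestrict_union [DecidableEq α] :
    ker (codeRestrict C (S ∪ T)) = ker (codeRestrict C S) ⊓ ker (codeRestrict C T) := by
  ext c
  simp only [Submodule.mem_inf, mem_ker_codeRestrict, mem_union, or_imp, forall_and]

lemma codeRank_le_card : codeRank C S ≤ #S := by
  simpa [codeRank] using (LinearMap.range (codeRestrict C S)).finrank_le

lemma codeRank_univ [Fintype α] : codeRank C univ = finrank F C :=
  LinearMap.finrank_range_of_inj <| LinearMap.ker_eq_bot.1 <| eq_bot_iff.2 fun _ hc ↦
    Subtype.ext (funext fun j ↦ mem_ker_codeRestrict.1 hc j (mem_univ j))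

variable [Finite α]

lemma codeRank_add_finrank_ker :
    codeRank C S + finrank F (ker (codeRestrict C S)) = finrank F C :=
  LinearMap.finrank_range_add_finrank_ker _

variable [DecidableEq α]

variable (C) in
lemma isMatroidRank_codeRank : IsMatroidRank fun S ↦ (codeRank C S : ℤ) where
  monotone S T hST := by
    have := Submodule.finrank_mono (ker_codeRestrict_anti (C := C) hST)
    have := codeRank_add_finrank_ker (C := C) (S := S)
    have := codeRank_add_finrank_ker (C := C) (S := T)
    lia
  union_add_inter_le S T := by
    have hsup : ker (codeRestrict C S) ⊔ ker (codeRestrict C T) ≤ ker (codeRestrict C (S ∩ T)) :=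
      sup_le (ker_codeRestrict_anti inter_subset_left) (ker_codeRestrict_anti inter_subset_right)
    have hdim := Submodule.finrank_sup_add_finrank_inf_eq
      (ker (codeRestrict C S)) (ker (codeRestrict C T))
    rw [← ker_codeRestrict_union] at hdim
    have := Submodule.finrank_mono hsup
    have hrank (S) := codeRank_add_finrank_ker (C := C) (S := S)
    have := hrank S
    have := hrank T
    have := hrank (S ∪ T)
    have := hrank (S ∩ T)
    lia
  map_empty := mod_cast Nat.le_zero.1 codeRank_le_card
  le_card S := mod_cast codeRank_le_card

lemma exists_mem_ne_zero_of_codeRank_lt {j : α} (h : codeRank C S < codeRank C (insert j S)) :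
    ∃ c ∈ C, (∀ i ∈ S, c i = 0) ∧ c j ≠ 0 := by
  by_contra! hcon
  have hker : ker (codeRestrict C S) ≤ ker (codeRestrict C (insert j S)) := fun c hc ↦ by
    rw [mem_ker_codeRestrict] at hc ⊢
    exact forall_mem_insert _ _ _ |>.2 ⟨hcon c c.2 hc, hc⟩
  have := Submodule.finrank_mono hker
  have := codeRank_add_finrank_ker (C := C) (S := S)
  have := codeRank_add_finrank_ker (C := C) (S := insert j S)
  lia

end Restriction

lemma hammingNorm_prod_le_card_compl_biUnion [DecidableEq F] {α ι : Type*} [Fintype α]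
    [DecidableEq α] [Fintype ι] {c : ι → α → F} {B : ι → Finset α}
    (hc : ∀ i, ∀ e ∈ B i, c i e = 0) :
    hammingNorm (∏ i, c i) ≤ #(univ.biUnion B)ᶜ := by
  refine card_le_card fun e he ↦ ?_
  rw [mem_filter, prod_apply, prod_ne_zero_iff] at he
  simpa using fun i hi ↦ he.2 i (mem_univ i) (hc i e hi)

variable {n : ℕ} {C : Submodule F (Fin n → F)}

lemma prod_mem_powCode :
    ∀ {t : ℕ} {c : Fin t → Fin n → F}, (∀ i, c i ∈ C) → ∏ i, c i ∈ powCode F C t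
  | 0, _, _ => Submodule.mem_top
  | 1, _, hc => by simpa [powCode] using hc 0
  | t + 2, c, hc => by
    rw [Fin.prod_univ_castSucc]
    exact Submodule.subset_span ⟨_, prod_mem_powCode fun i ↦ hc i.castSucc, _, hc _, rfl⟩

variable [DecidableEq F]

lemma dmin_le_hammingNorm {c : Fin n → F} (hc : c ∈ C) (hc0 : c ≠ 0) :
    dmin C ≤ hammingNorm c :=
  Nat.sInf_le ⟨c, hc, hc0, rfl⟩

lemma dmin_le_length (hC : C ≠ ⊥) : dmin C ≤ n := by
  obtain ⟨c, hc, hc0⟩ := C.exists_mem_ne_zero_of_ne_bot hC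
  simpa using (dmin_le_hammingNorm hc hc0).trans hammingNorm_le_card_fintype

theorem stmt7_general {t k : ℕ} (ht : 2 ≤ t) (C : Submodule F (Fin n → F))
    (hk : finrank F C = k) (hne : powCode F C t ≠ ⊥) :
    dmin (powCode F C t) ≤ max (t - 1) (n + t - t * k) := by
  rcases k.eq_zero_or_pos with rfl | hk0
  · exact (dmin_le_length hne).trans (by lia)
  obtain ⟨j, B, hB, hcard⟩ := (isMatroidRank_codeRank C).exists_card_compl_biUnion_le_max ht hk0
    (mod_cast codeRank_univ.trans hk)
  choose c hcC hcB hcj using fun i ↦ exists_mem_ne_zero_of_codeRank_lt (mod_cast hB i)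
  have hprod : (∏ i, c i) ≠ 0 := fun h ↦
    prod_ne_zero_iff.2 (fun i _ ↦ hcj i) ((prod_apply j univ c).symm.trans (congrFun h j))
  calc dmin (powCode F C t)
      ≤ hammingNorm (∏ i, c i) := dmin_le_hammingNorm (prod_mem_powCode hcC) hprod
    _ ≤ #(univ.biUnion B)ᶜ := hammingNorm_prod_le_card_compl_biUnion hcB
    _ ≤ max (t - 1) (n + t - t * k) := by simpa using hcard

end Codes

theorem stmt7 {F : Type*} [Field F] [Fintype F] [DecidableEq F] {n t k : ℕ}
    (ht : 2 ≤ t) (C : Submodule F (Fin n → F)) (hk : Module.finrank F C = k)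
    (hne : powCode F C t ≠ ⊥) :
    dmin (powCode F C t) ≤ max (t - 1) (n + t - t * k) :=
  stmt7_general ht C hk hne

end
end
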